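/- Let n = 2m be a positive even integer. Let H be a complex Hilbert space with grading operator ε, F a bounded operator with F² = 1 and Fε = −εF, Ã a unital ℂ-algebra, and ρ : Ã → B(H) a unital homomorphism into even operators with Fρ(a) − ρ(a)F (n+1)-Schatten for all a ∈ Ã. Then: (i) [F,ω] is trace class for every ω ∈ Ωⁿ, so Tr_s(ω) := (1/2)Trace(εF[F,ω]) is defined on Ωⁿ; (ii) Tr_s(dω) = 0 for every ω ∈ Ω^{n−1}; and (iii) for ω₁ ∈ Ω^{n₁} and ω₂ ∈ Ω^{n₂} with n₁ + n₂ = n, Tr_s(ω₁ω₂) = (−1)^{n₁n₂} Tr_s(ω₂ω₁). That is, Tr_s restricted to Ωⁿ is a closed graded trace of dimension n on the differential graded algebra Ω. -/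

import Mathlib

open scoped ENNReal

noncomputable section

variable {H : Type*} [NormedAddCommGroup H] [InnerProductSpace ℂ H] [CompleteSpace H]
variable {A : Type*} [Ring A] [Algebra ℂ A]

/-- The `n`-th singular value of a (compact) operator `T` (approximation numbers). -/
def sval (T : H →L[ℂ] H) (n : ℕ) : ℝ :=
  sInf {c : ℝ | ∃ R : H →L[ℂ] H,
    Module.rank ℂ (LinearMap.range (R : H →ₗ[ℂ] H)) ≤ (n : Cardinal) ∧ c = ‖T - R‖}

/-- The `p`-Schatten norm `‖T‖_p = (Σ_n s_n(T)^p)^(1/p)`, valued in `ℝ≥0∞`. -/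
def schattenNorm (p : ℝ) (T : H →L[ℂ] H) : ℝ≥0∞ :=
  (∑' n : ℕ, ENNReal.ofReal (sval T n ^ p)) ^ (1 / p)

/-- `T` is a `p`-Schatten operator: compact with finite `p`-Schatten norm. -/
def MemSchatten (p : ℝ) (T : H →L[ℂ] H) : Prop :=
  IsCompactOperator (⇑T) ∧ schattenNorm p T < ⊤

/-- The trace of an operator, computed in a (choice of) Hilbert basis of `H`. -/
def opTrace (T : H →L[ℂ] H) : ℂ :=
  ∑' i : (exists_hilbertBasis ℂ H).choose,
    @inner ℂ H _ ((exists_hilbertBasis ℂ H).choose_spec.choose i)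
      (T ((exists_hilbertBasis ℂ H).choose_spec.choose i))

/-- The even part of `θ` with respect to the grading `ε`. -/
def evenPart (ε θ : H →L[ℂ] H) : H →L[ℂ] H := (2 : ℂ)⁻¹ • (θ + ε * θ * ε)

/-- The odd part of `θ` with respect to the grading `ε`. -/
def oddPart (ε θ : H →L[ℂ] H) : H →L[ℂ] H := (2 : ℂ)⁻¹ • (θ - ε * θ * ε)

/-- The graded commutator `[F, θ]`, extended additively from homogeneous operators. -/
def gComm (ε F θ : H →L[ℂ] H) : H →L[ℂ] H :=
  (F * evenPart ε θ - evenPart ε θ * F) + (F * oddPart ε θ + oddPart ε θ * F)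

/-- The differential `dθ := i[F, θ]`. -/
def gD (ε F θ : H →L[ℂ] H) : H →L[ℂ] H := Complex.I • gComm ε F θ

/-- The graded trace `Tr_s(θ) := (1/2)·Trace(εF[F,θ])`. -/
def Trs (ε F θ : H →L[ℂ] H) : ℂ := (2 : ℂ)⁻¹ * opTrace (ε * F * gComm ε F θ)

/-- `dT = i(FT - TF)` for an even operator `T`. -/
def dOp (F T : H →L[ℂ] H) : H →L[ℂ] H := Complex.I • (F * T - T * F)

/-- The ordered product `f s * f (s+1) * ⋯ * f (s+k-1)` of operators. -/
def opList (f : ℕ → H →L[ℂ] H) (s k : ℕ) : H →L[ℂ] H := ((List.range' s k).map f).prod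

/-- `Ω^j`: the linear span in `B(H)` of the operators `ρ(a₀)dρ(a₁)⋯dρ(a_j)`. -/
def Omega (ρ : A →ₐ[ℂ] (H →L[ℂ] H)) (F : H →L[ℂ] H) (j : ℕ) : Submodule ℂ (H →L[ℂ] H) :=
  Submodule.span ℂ {x | ∃ a : Fin (j + 1) → A,
    x = ρ (a 0) *
      opList (fun k => dOp F (ρ (a ⟨k % (j + 1), Nat.mod_lt _ (Nat.succ_pos j)⟩))) 1 j}

section Helpers

set_option linter.unusedSectionVars false
set_option linter.style.haveILetI false

open Filter Topology

/-- rank at most `n` -/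
def RkLe (R : H →L[ℂ] H) (n : ℕ) : Prop :=
  Module.rank ℂ (LinearMap.range (R : H →ₗ[ℂ] H)) ≤ (n : Cardinal)

theorem RkLe.zero (n : ℕ) : RkLe (0 : H →L[ℂ] H) n := by
  unfold RkLe
  have : LinearMap.range ((0 : H →L[ℂ] H) : H →ₗ[ℂ] H) = ⊥ := by
    ext x; simp
  rw [this]; simp

theorem RkLe.mono {R : H →L[ℂ] H} {m n : ℕ} (h : RkLe R m) (hmn : m ≤ n) : RkLe R n :=
  le_trans h (by exact_mod_cast hmn)

theorem RkLe.add {R S : H →L[ℂ] H} {m n : ℕ} (h : RkLe R m) (h' : RkLe S n) :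
    RkLe (R + S) (m + n) := by
  have := LinearMap.rank_add_le (R : H →ₗ[ℂ] H) (S : H →ₗ[ℂ] H)
  unfold RkLe at *
  push_cast
  exact le_trans this (add_le_add h h')

theorem RkLe.mul_right {R : H →L[ℂ] H} {m : ℕ} (h : RkLe R m) (S : H →L[ℂ] H) :
    RkLe (R * S) m :=
  le_trans (LinearMap.rank_comp_le_left (S : H →ₗ[ℂ] H) (R : H →ₗ[ℂ] H)) h

theorem RkLe.mul_left {R : H →L[ℂ] H} {m : ℕ} (h : RkLe R m) (S : H →L[ℂ] H) :
    RkLe (S * R) m :=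
  le_trans (LinearMap.rank_comp_le_right (R : H →ₗ[ℂ] H) (S : H →ₗ[ℂ] H)) h

theorem RkLe.neg {R : H →L[ℂ] H} {m : ℕ} (h : RkLe R m) : RkLe (-R) m := by
  have := h.mul_left (-1)
  simpa using this

theorem sval_set_nonempty (T : H →L[ℂ] H) (n : ℕ) :
    {c : ℝ | ∃ R : H →L[ℂ] H,
    Module.rank ℂ (LinearMap.range (R : H →ₗ[ℂ] H)) ≤ (n : Cardinal) ∧ c = ‖T - R‖}.Nonempty :=
  ⟨_, 0, RkLe.zero n, rfl⟩

theorem sval_nonneg (T : H →L[ℂ] H) (n : ℕ) : 0 ≤ sval T n := by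
  apply Real.sInf_nonneg
  rintro c ⟨R, -, rfl⟩
  exact norm_nonneg _

theorem sval_le {T R : H →L[ℂ] H} {n : ℕ} (h : RkLe R n) : sval T n ≤ ‖T - R‖ := by
  apply csInf_le
  · refine ⟨0, ?_⟩
    rintro c ⟨R, -, rfl⟩
    exact norm_nonneg _
  · exact ⟨R, h, rfl⟩

theorem exists_approx (T : H →L[ℂ] H) (n : ℕ) {δ : ℝ} (hδ : 0 < δ) :
    ∃ R : H →L[ℂ] H, RkLe R n ∧ ‖T - R‖ < sval T n + δ := by
  obtain ⟨c, ⟨R, hR, rfl⟩, hc⟩ := Real.lt_sInf_add_pos (sval_set_nonempty T n) hδ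
  exact ⟨R, hR, hc⟩

theorem sval_le_norm (T : H →L[ℂ] H) (n : ℕ) : sval T n ≤ ‖T‖ := by
  simpa using sval_le (T := T) (RkLe.zero n)

theorem sval_antitone (T : H →L[ℂ] H) : Antitone (sval T) := by
  intro m n hmn
  apply le_of_forall_pos_le_add
  intro δ hδ
  obtain ⟨R, hR, h⟩ := exists_approx T m hδ
  exact (sval_le (hR.mono hmn)).trans h.le

theorem sval_add (S T : H →L[ℂ] H) (m n : ℕ) : sval (S + T) (m + n) ≤ sval S m + sval T n := by
  apply le_of_forall_pos_le_add
  intro δ hδ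
  obtain ⟨R, hR, h⟩ := exists_approx S m (half_pos hδ)
  obtain ⟨R', hR', h'⟩ := exists_approx T n (half_pos hδ)
  refine (sval_le (hR.add hR')).trans ?_
  have : S + T - (R + R') = (S - R) + (T - R') := by abel
  rw [this]
  refine (norm_add_le _ _).trans ?_
  linarith

theorem sval_mul (S T : H →L[ℂ] H) (m n : ℕ) : sval (S * T) (m + n) ≤ sval S m * sval T n := by
  have key : ∀ δ > 0, sval (S * T) (m + n) ≤ (sval S m + δ) * (sval T n + δ) := by
    intro δ hδ
    obtain ⟨R, hR, h⟩ := exists_approx S m hδ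
    obtain ⟨R', hR', h'⟩ := exists_approx T n hδ
    refine (sval_le ((hR.mul_right (T - R')).add (hR'.mul_left S))).trans ?_
    have : S * T - (R * (T - R') + S * R') = (S - R) * (T - R') := by noncomm_ring
    rw [this]
    refine (norm_mul_le _ _).trans ?_
    have := sval_nonneg S m
    exact mul_le_mul h.le h'.le (norm_nonneg _) (by linarith)
  have ht : Tendsto (fun δ : ℝ => (sval S m + δ) * (sval T n + δ)) (𝓝[>] 0)
      (𝓝 ((sval S m + 0) * (sval T n + 0))) := by
    apply Tendsto.mono_left _ nhdsWithin_le_nhds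
    apply Continuous.tendsto (f := fun δ : ℝ => (sval S m + δ) * (sval T n + δ))
    fun_prop
  have := ge_of_tendsto ht (eventually_nhdsWithin_of_forall (fun δ hδ => key δ hδ))
  simpa using this

theorem sval_mul_le_left (S T : H →L[ℂ] H) (n : ℕ) : sval (S * T) n ≤ ‖S‖ * sval T n := by
  have := sval_mul S T 0 n
  rw [zero_add] at this
  exact this.trans (mul_le_mul_of_nonneg_right (sval_le_norm S 0) (sval_nonneg _ _))

theorem sval_mul_le_right (S T : H →L[ℂ] H) (n : ℕ) : sval (S * T) n ≤ sval S n * ‖T‖ := by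
  have := sval_mul S T n 0
  rw [add_zero] at this
  exact this.trans (mul_le_mul_of_nonneg_left (sval_le_norm T 0) (sval_nonneg _ _))

theorem sval_smul_le (c : ℂ) (T : H →L[ℂ] H) (n : ℕ) : sval (c • T) n ≤ ‖c‖ * sval T n := by
  have := sval_mul_le_left (c • (1 : H →L[ℂ] H)) T n
  rw [smul_mul_assoc, one_mul] at this
  refine this.trans (mul_le_mul_of_nonneg_right ?_ (sval_nonneg _ _))
  rw [norm_smul]
  have : ‖(1 : H →L[ℂ] H)‖ ≤ 1 := ContinuousLinearMap.norm_id_le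
  nlinarith [norm_nonneg c]

theorem summable_div {h : ℕ → ℝ} (hs : Summable h) (h0 : ∀ n, 0 ≤ h n) {N : ℕ} (hN : 0 < N) :
    Summable (fun i => h (i / N)) := by
  haveI : NeZero N := ⟨hN.ne'⟩
  rw [← (Nat.divModEquiv N).symm.summable_iff]
  have : ((fun i => h (i / N)) ∘ (Nat.divModEquiv N).symm) = fun p : ℕ × Fin N => h p.1 * 1 := by
    funext p
    simp only [Function.comp, mul_one]
    congr 1
    have := (Nat.divModEquiv N).apply_symm_apply p
    have h2 := congrArg Prod.fst this
    simpa [Nat.divModEquiv] using h2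
  rw [this]
  exact Summable.mul_of_nonneg (f := h) (g := fun _ : Fin N => (1:ℝ)) hs (Summable.of_finite) h0
    (fun _ => zero_le_one)

theorem summable_of_sampled {g : ℕ → ℝ} (hg : Antitone g) (h0 : ∀ n, 0 ≤ g n) {N : ℕ}
    (hN : 0 < N) (hs : Summable (fun k => g (N * k))) : Summable g := by
  refine Summable.of_nonneg_of_le h0 (fun i => ?_) (summable_div hs (fun n => h0 _) hN)
  exact hg (Nat.mul_div_le i N)

/-- pairs of operators whose product is trace class by Hölder -/
def Pair (S T : H →L[ℂ] H) : Prop :=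
  Tendsto (sval S) atTop (𝓝 0) ∧ Summable (fun k => sval S k * sval T k)

theorem pair_antitone (S T : H →L[ℂ] H) : Antitone (fun k => sval S k * sval T k) :=
  fun _ _ h => mul_le_mul (sval_antitone S h) (sval_antitone T h) (sval_nonneg _ _)
    (sval_nonneg _ _)

theorem pair_nonneg (S T : H →L[ℂ] H) (k : ℕ) : 0 ≤ sval S k * sval T k :=
  mul_nonneg (sval_nonneg _ _) (sval_nonneg _ _)

theorem sval_two_add_le (S T : H →L[ℂ] H) (k : ℕ) :
    sval (S + T) (2 * k) ≤ sval S k + sval T k := by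
  rw [two_mul]; exact sval_add S T k k

theorem tendsto_zero_of_sampled {S : H →L[ℂ] H} {N : ℕ} (hN : 0 < N) {g : ℕ → ℝ}
    (hg : Tendsto g atTop (𝓝 0)) (h : ∀ k, sval S (N * k) ≤ g k) :
    Tendsto (sval S) atTop (𝓝 0) := by
  have h1 : Tendsto (fun i : ℕ => g (i / N)) atTop (𝓝 0) :=
    hg.comp (Nat.tendsto_div_const_atTop hN.ne')
  refine squeeze_zero (sval_nonneg S) (fun i => ?_) h1
  exact (sval_antitone S (Nat.mul_div_le i N)).trans (h _)

theorem Pair.add_left {S S' T : H →L[ℂ] H} (h : Pair S T) (h' : Pair S' T) : Pair (S + S') T := by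
  refine ⟨tendsto_zero_of_sampled two_pos (by simpa using h.1.add h'.1) (sval_two_add_le S S'), ?_⟩
  refine summable_of_sampled (pair_antitone _ _) (pair_nonneg _ _) two_pos ?_
  refine Summable.of_nonneg_of_le (fun k => pair_nonneg _ _ _) (fun k => ?_) (h.2.add h'.2)
  rw [← add_mul]
  exact mul_le_mul (sval_two_add_le S S' k) (sval_antitone T (by omega)) (sval_nonneg _ _)
    (add_nonneg (sval_nonneg _ _) (sval_nonneg _ _))

theorem Pair.add_right {S T T' : H →L[ℂ] H} (h : Pair S T) (h' : Pair S T') : Pair S (T + T') := by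
  refine ⟨h.1, ?_⟩
  refine summable_of_sampled (pair_antitone _ _) (pair_nonneg _ _) two_pos ?_
  refine Summable.of_nonneg_of_le (fun k => pair_nonneg _ _ _) (fun k => ?_) (h.2.add h'.2)
  rw [← mul_add]
  exact mul_le_mul (sval_antitone S (by omega)) (sval_two_add_le T T' k) (sval_nonneg _ _)
    (sval_nonneg _ _)

theorem Pair.mul_right {S T : H →L[ℂ] H} (h : Pair S T) (X : H →L[ℂ] H) : Pair S (X * T) := by
  refine ⟨h.1, ?_⟩
  refine Summable.of_nonneg_of_le (fun k => pair_nonneg _ _ _) (fun k => ?_) (h.2.mul_left ‖X‖)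
  calc _ ≤ sval S k * (‖X‖ * sval T k) :=
        mul_le_mul_of_nonneg_left (sval_mul_le_left _ _ _) (sval_nonneg _ _)
    _ = _ := by ring

theorem Pair.mul_left {S T : H →L[ℂ] H} (h : Pair S T) (X : H →L[ℂ] H) : Pair (X * S) T := by
  refine ⟨squeeze_zero (sval_nonneg _) (sval_mul_le_left X S) (by simpa using h.1.const_mul ‖X‖), ?_⟩
  refine Summable.of_nonneg_of_le (fun k => pair_nonneg _ _ _) (fun k => ?_) (h.2.mul_left ‖X‖)
  calc _ ≤ (‖X‖ * sval S k) * sval T k :=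
        mul_le_mul_of_nonneg_right (sval_mul_le_left _ _ _) (sval_nonneg _ _)
    _ = _ := by ring

theorem Pair.smul_left {S T : H →L[ℂ] H} (h : Pair S T) (c : ℂ) : Pair (c • S) T := by
  have := h.mul_left (c • 1)
  rwa [smul_mul_assoc, one_mul] at this

theorem Pair.smul_right {S T : H →L[ℂ] H} (h : Pair S T) (c : ℂ) : Pair S (c • T) := by
  have := h.mul_right (c • 1)
  rwa [smul_mul_assoc, one_mul] at this

theorem summable_sval_mul {S T : H →L[ℂ] H} (h : Summable (fun k => sval S k * sval T k)) :
    Summable (sval (S * T)) := by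
  refine summable_of_sampled (sval_antitone _) (sval_nonneg _) two_pos ?_
  refine Summable.of_nonneg_of_le (fun k => sval_nonneg _ _) (fun k => ?_) h
  rw [two_mul]
  exact sval_mul S T k k

/-- diagonal sums in a Hilbert basis -/
theorem sum_inner_mul_le {ι : Type*} (b : HilbertBasis ι ℂ H) (x y : H) (s : Finset ι) :
    ∑ i ∈ s, ‖inner ℂ (b i) x‖ * ‖inner ℂ y (b i)‖ ≤ ‖x‖ * ‖y‖ := by
  have h1 := b.orthonormal.sum_inner_products_le x (s := s)
  have h2 := b.orthonormal.sum_inner_products_le y (s := s)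
  refine (Real.sum_mul_le_sqrt_mul_sqrt s _ _).trans ?_
  have h2' : ∑ i ∈ s, ‖inner ℂ y (b i)‖ ^ 2 ≤ ‖y‖ ^ 2 := by
    simpa only [norm_inner_symm y] using h2
  apply mul_le_mul _ _ (Real.sqrt_nonneg _) (norm_nonneg _)
  · exact Real.sqrt_le_iff.2 ⟨norm_nonneg _, h1⟩
  · exact Real.sqrt_le_iff.2 ⟨norm_nonneg _, h2'⟩

theorem RkLe.rep {R : H →L[ℂ] H} {r : ℕ} (h : RkLe R r) :
    ∃ (d : ℕ) (f g : Fin d → H), d ≤ r ∧ (∀ l, ‖f l‖ ≤ 1) ∧ (∀ l, ‖g l‖ ≤ ‖R‖) ∧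
      ∀ x, R x = ∑ l, inner ℂ (g l) x • f l := by
  have hlt : Module.rank ℂ (LinearMap.range (R : H →ₗ[ℂ] H)) < Cardinal.aleph0 :=
    lt_of_le_of_lt h (Cardinal.natCast_lt_aleph0)
  haveI : FiniteDimensional ℂ (LinearMap.range (R : H →ₗ[ℂ] H)) :=
    Module.rank_lt_aleph0_iff.1 hlt
  set V := LinearMap.range (R : H →ₗ[ℂ] H)
  let u := stdOrthonormalBasis ℂ V
  refine ⟨Module.finrank ℂ V, fun l => (u l : H), fun l => ContinuousLinearMap.adjoint R (u l : H),
    ?_, ?_, ?_, ?_⟩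
  · have h' : Module.rank ℂ V ≤ (r : Cardinal) := h
    rw [← Module.finrank_eq_rank] at h'
    exact_mod_cast h'
  · intro l
    have := u.orthonormal.1 l
    exact (show ‖(u l : H)‖ = 1 from this).le
  · intro l
    have h1 : ‖(u l : H)‖ = 1 := u.orthonormal.1 l
    have := (ContinuousLinearMap.adjoint R).le_opNorm (u l : H)
    simpa [h1] using this
  · intro x
    have hx : R x ∈ V := ⟨x, rfl⟩
    have := u.sum_repr' ⟨R x, hx⟩
    have h2 := congrArg (Subtype.val) this
    rw [← show ((⟨R x, hx⟩ : V) : H) = R x from rfl, ← h2]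
    simp [ContinuousLinearMap.adjoint_inner_left]

theorem RkLe.sum_le {ι : Type*} (b : HilbertBasis ι ℂ H) {R : H →L[ℂ] H} {r : ℕ} (h : RkLe R r)
    (s : Finset ι) : ∑ i ∈ s, ‖inner ℂ (b i) (R (b i))‖ ≤ r * ‖R‖ := by
  obtain ⟨d, f, g, hd, hf, hg, hR⟩ := h.rep
  calc ∑ i ∈ s, ‖inner ℂ (b i) (R (b i))‖
      ≤ ∑ i ∈ s, ∑ l, ‖inner ℂ (b i) (f l)‖ * ‖inner ℂ (g l) (b i)‖ := by
        apply Finset.sum_le_sum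
        intro i _
        rw [hR, inner_sum]
        refine (norm_sum_le _ _).trans (Finset.sum_le_sum fun l _ => ?_)
        rw [inner_smul_right, norm_mul, mul_comm]
    _ = ∑ l, ∑ i ∈ s, ‖inner ℂ (b i) (f l)‖ * ‖inner ℂ (g l) (b i)‖ := Finset.sum_comm
    _ ≤ ∑ l : Fin d, ‖R‖ := by
        apply Finset.sum_le_sum
        intro l _
        refine (sum_inner_mul_le b _ _ s).trans ?_
        have := mul_le_mul (hf l) (hg l) (norm_nonneg _) zero_le_one
        simpa using this
    _ = d * ‖R‖ := by simp
    _ ≤ r * ‖R‖ := by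
        apply mul_le_mul_of_nonneg_right _ (norm_nonneg _)
        exact_mod_cast hd

theorem RkLe.trace_comm {ι : Type*} (b : HilbertBasis ι ℂ H) {R : H →L[ℂ] H} {r : ℕ} (h : RkLe R r)
    (B : H →L[ℂ] H) : ∃ t : ℂ, HasSum (fun i => inner ℂ (b i) ((R * B) (b i))) t ∧
      HasSum (fun i => inner ℂ (b i) ((B * R) (b i))) t := by
  obtain ⟨d, f, g, hd, hf, hg, hR⟩ := h.rep
  refine ⟨∑ l, inner ℂ (g l) (B (f l)), ?_, ?_⟩
  · have := hasSum_sum (s := Finset.univ) (fun l _ => b.hasSum_inner_mul_inner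
      (ContinuousLinearMap.adjoint B (g l)) (f l))
    simp only [ContinuousLinearMap.adjoint_inner_left] at this
    refine Eq.mp (congrArg (fun u => HasSum u _) (funext fun i => ?_)) this
    simp [hR, inner_sum, inner_smul_right]
  · have := hasSum_sum (s := Finset.univ) (fun l _ => b.hasSum_inner_mul_inner
      (g l) (B (f l)))
    refine Eq.mp (congrArg (fun u => HasSum u _) (funext fun i => ?_)) this
    simp [hR, inner_sum, inner_smul_right]

theorem condensed_le {T : H →L[ℂ] H} (hT : Summable (sval T)) (J : ℕ) :
    ∑ j ∈ Finset.range J, (2:ℝ) ^ j * sval T (2 ^ j - 1) ≤ 2 * ∑' k, sval T k := by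
  rcases J with _ | J
  · simpa using tsum_nonneg (sval_nonneg T)
  have h := Finset.sum_condensed_le (f := fun k => sval T (k - 1))
    (fun m n _ hmn => sval_antitone T (by omega)) J
  simp only [nsmul_eq_mul] at h
  push_cast at h
  refine h.trans ?_
  have h2 : ∑ k ∈ Finset.Ico 2 (2 ^ J + 1), sval T (k - 1)
      = ∑ k ∈ Finset.Ico 1 (2 ^ J), sval T k := by
    rw [Finset.sum_Ico_eq_sum_range, Finset.sum_Ico_eq_sum_range]
    apply Finset.sum_congr
    · congr 1
    · intro k _
      congr 1
      omega
  rw [h2]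
  have h3 : ∑ k ∈ Finset.Ico 1 (2 ^ J), sval T k + sval T 0 ≤ ∑' k, sval T k := by
    have := hT.sum_le_tsum (insert 0 (Finset.Ico 1 (2 ^ J))) (fun i _ => sval_nonneg T i)
    rw [Finset.sum_insert (by simp)] at this
    linarith
  have := sval_nonneg T 0
  linarith

theorem diag_sum_le {ι : Type*} (b : HilbertBasis ι ℂ H) {T : H →L[ℂ] H} (hT : Summable (sval T))
    (s : Finset ι) : ∑ i ∈ s, ‖inner ℂ (b i) (T (b i))‖ ≤ 12 * ∑' k, sval T k := by
  have key : ∀ η > 0, ∑ i ∈ s, ‖inner ℂ (b i) (T (b i))‖ ≤ 12 * ∑' k, sval T k + 12 * η := by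
    intro η hη
    have hδ : ∀ j : ℕ, 0 < η * (1/4 : ℝ) ^ j := fun j => by positivity
    choose R hR hTR using fun j : ℕ => exists_approx T (2 ^ j - 1) (hδ j)
    have hD : ∀ J, ∑ i ∈ s, ‖inner ℂ (b i) (R J (b i))‖ ≤
        ∑ j ∈ Finset.range J, 3 * (2:ℝ) ^ j * (2 * (sval T (2 ^ j - 1) + η * (1/4:ℝ)^j)) := by
      intro J
      induction J with
      | zero =>
        have := (hR 0).sum_le b s
        simpa using this
      | succ J ih =>
        rw [Finset.sum_range_succ]
        have hrk : RkLe (R (J + 1) - R J) (3 * 2 ^ J) := by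
          have := (hR (J + 1)).add (hR J).neg
          rw [← sub_eq_add_neg] at this
          refine this.mono ?_
          rw [pow_succ]; omega
        have h1 := hrk.sum_le b s
        have hn : ‖R (J + 1) - R J‖ ≤ 2 * (sval T (2 ^ J - 1) + η * (1/4:ℝ)^J) := by
          have e : R (J + 1) - R J = (T - R J) - (T - R (J + 1)) := by abel
          rw [e]
          refine (norm_sub_le _ _).trans ?_
          have a1 := hTR J
          have a2 := hTR (J + 1)
          have a3 : sval T (2 ^ (J + 1) - 1) ≤ sval T (2 ^ J - 1) := by
            apply sval_antitone; rw [pow_succ]; omega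
          have a4 : η * (1/4:ℝ) ^ (J + 1) ≤ η * (1/4:ℝ) ^ J := by
            have := hδ J
            rw [pow_succ]; linarith
          linarith
        have h2 : ∑ i ∈ s, ‖inner ℂ (b i) (R (J + 1) (b i))‖ ≤
            ∑ i ∈ s, ‖inner ℂ (b i) (R J (b i))‖ +
            ∑ i ∈ s, ‖inner ℂ (b i) ((R (J + 1) - R J) (b i))‖ := by
          rw [← Finset.sum_add_distrib]
          apply Finset.sum_le_sum
          intro i _
          refine le_trans (le_of_eq ?_) (norm_add_le _ _)
          rw [← inner_add_right]
          congr 2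
          simp
        have h3 : ((3 * 2 ^ J : ℕ) : ℝ) * ‖R (J + 1) - R J‖ ≤
            3 * (2:ℝ) ^ J * (2 * (sval T (2 ^ J - 1) + η * (1/4:ℝ)^J)) := by
          push_cast
          exact mul_le_mul_of_nonneg_left hn (by positivity)
        linarith
    have hD2 : ∀ J, ∑ i ∈ s, ‖inner ℂ (b i) (R J (b i))‖ ≤ 12 * ∑' k, sval T k + 12 * η := by
      intro J
      refine (hD J).trans ?_
      have e : ∀ j : ℕ, 3 * (2:ℝ) ^ j * (2 * (sval T (2 ^ j - 1) + η * (1/4:ℝ)^j)) =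
          6 * ((2:ℝ) ^ j * sval T (2 ^ j - 1)) + 6 * η * (1/2:ℝ) ^ j := by
        intro j
        have : (1/2:ℝ) ^ j = 2 ^ j * (1/4) ^ j := by rw [← mul_pow]; norm_num
        rw [this]; ring
      simp only [e]
      rw [Finset.sum_add_distrib, ← Finset.mul_sum, ← Finset.mul_sum]
      have c1 := condensed_le hT J
      have c2 : ∑ j ∈ Finset.range J, (1/2:ℝ) ^ j ≤ 2 := by
        have := (summable_geometric_two).sum_le_tsum (Finset.range J) (fun i _ => by positivity)
        rwa [tsum_geometric_two] at this
      nlinarith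
    have hfin : ∀ J, ∑ i ∈ s, ‖inner ℂ (b i) (T (b i))‖ ≤
        12 * ∑' k, sval T k + 12 * η + s.card * (sval T J + η * (1/4:ℝ)^J) := by
      intro J
      have h2 : ∑ i ∈ s, ‖inner ℂ (b i) (T (b i))‖ ≤
            ∑ i ∈ s, ‖inner ℂ (b i) (R (J + 1) (b i))‖ +
            ∑ i ∈ s, ‖inner ℂ (b i) ((T - R (J + 1)) (b i))‖ := by
        rw [← Finset.sum_add_distrib]
        apply Finset.sum_le_sum
        intro i _
        refine le_trans (le_of_eq ?_) (norm_add_le _ _)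
        rw [← inner_add_right]
        congr 2
        simp
      have h3 : ∑ i ∈ s, ‖inner ℂ (b i) ((T - R (J + 1)) (b i))‖ ≤
          ∑ i ∈ s, (sval T J + η * (1/4:ℝ)^J) := by
        apply Finset.sum_le_sum
        intro i _
        have hb : ‖b i‖ = 1 := b.orthonormal.1 i
        refine (norm_inner_le_norm _ _).trans ?_
        rw [hb, one_mul]
        have := (T - R (J + 1)).le_opNorm (b i)
        rw [hb, mul_one] at this
        refine this.trans ((hTR (J + 1)).le.trans ?_)
        have a3 : sval T (2 ^ (J + 1) - 1) ≤ sval T J := by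
          apply sval_antitone
          have : J + 1 < 2 ^ (J + 1) := Nat.lt_two_pow_self
          omega
        have a4 : η * (1/4:ℝ) ^ (J + 1) ≤ η * (1/4:ℝ) ^ J := by
          have := hδ J
          rw [pow_succ]; linarith
        linarith
      rw [Finset.sum_const, nsmul_eq_mul] at h3
      have := hD2 (J + 1)
      linarith
    have hlim : Tendsto (fun J => 12 * ∑' k, sval T k + 12 * η +
        (s.card : ℝ) * (sval T J + η * (1/4:ℝ)^J)) atTop
        (𝓝 (12 * ∑' k, sval T k + 12 * η + (s.card : ℝ) * (0 + η * 0))) := by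
      apply Tendsto.const_add
      apply Tendsto.const_mul
      apply Tendsto.add hT.tendsto_atTop_zero
      apply Tendsto.const_mul
      exact tendsto_pow_atTop_nhds_zero_of_lt_one (by norm_num) (by norm_num)
    have := ge_of_tendsto' hlim hfin
    simpa using this
  apply le_of_forall_pos_le_add
  intro η hη
  have := key (η / 12) (by positivity)
  linarith

theorem diag_summable {ι : Type*} (b : HilbertBasis ι ℂ H) {T : H →L[ℂ] H}
    (hT : Summable (sval T)) : Summable (fun i => inner ℂ (b i) (T (b i))) :=
  Summable.of_norm (summable_of_sum_le (fun _ => norm_nonneg _) (diag_sum_le b hT))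

theorem diag_tsum_le {ι : Type*} (b : HilbertBasis ι ℂ H) {T : H →L[ℂ] H}
    (hT : Summable (sval T)) : ‖∑' i, inner ℂ (b i) (T (b i))‖ ≤ 12 * ∑' k, sval T k := by
  have hs : Summable (fun i => ‖inner ℂ (b i) (T (b i))‖) :=
    summable_of_sum_le (fun _ => norm_nonneg _) (diag_sum_le b hT)
  refine (norm_tsum_le_tsum_norm hs).trans ?_
  exact Real.tsum_le_of_sum_le (fun _ => norm_nonneg _) (diag_sum_le b hT)

/-- cyclicity of the trace -/
theorem Pair.trace_comm {ι : Type*} (b : HilbertBasis ι ℂ H) {S T : H →L[ℂ] H} (h : Pair S T) :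
    ∑' i, inner ℂ (b i) ((S * T) (b i)) = ∑' i, inner ℂ (b i) ((T * S) (b i)) := by
  obtain ⟨h0, hs⟩ := h
  have hδ : ∀ j : ℕ, 0 < (1/2 : ℝ) ^ j := fun j => by positivity
  choose R hR hSR using fun j : ℕ => exists_approx S j (hδ j)
  set a : ℕ → ℝ := fun k => sval S k + (1/2:ℝ) ^ k with ha
  have a_anti : Antitone a := fun m n hmn => add_le_add (sval_antitone S hmn)
    (pow_le_pow_of_le_one (by norm_num) (by norm_num) hmn)
  have a_nonneg : ∀ k, 0 ≤ a k := fun k => add_nonneg (sval_nonneg _ _) (hδ k).le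
  have a_lim : Tendsto a atTop (𝓝 0) := by
    have := h0.add (tendsto_pow_atTop_nhds_zero_of_lt_one (r := (1/2:ℝ)) (by norm_num)
      (by norm_num))
    rwa [add_zero] at this
  have hRk : ∀ j k, sval (S - R j) k ≤ a (k / 2) := by
    intro j k
    rcases le_total (k / 2) j with hjk | hjk
    · exact (sval_le_norm _ _).trans ((hSR j).le.trans (a_anti hjk))
    · have h1 := sval_add S (-R j) (k / 2) (k - k / 2)
      have h2 : sval (-R j) (k - k / 2) ≤ 0 := by
        have := sval_le (T := -R j) ((hR j).neg.mono (n := k - k / 2) (by omega))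
        simpa using this
      rw [← sub_eq_add_neg, show k / 2 + (k - k / 2) = k by omega] at h1
      have := hδ (k / 2)
      simp only [ha]
      linarith
  -- the dominating sequence
  have hsum : Summable (fun k => a k * sval T k) := by
    have h1 : Summable (fun k => (1/2:ℝ) ^ k * sval T k) := by
      refine Summable.of_nonneg_of_le (fun k => mul_nonneg (hδ k).le (sval_nonneg _ _))
        (fun k => mul_le_mul_of_nonneg_left (sval_le_norm T k) (hδ k).le)
        ((summable_geometric_two).mul_right _)
    refine (hs.add h1).congr (fun k => ?_)
    simp only [ha]; ring
  have hbound : Summable (fun i => a (i / 4) * sval T (i / 4)) :=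
    summable_div hsum (fun k => mul_nonneg (a_nonneg _) (sval_nonneg _ _)) (by norm_num)
  have b1 : ∀ j i, sval ((S - R j) * T) i ≤ a (i / 4) * sval T (i / 4) := by
    intro j i
    have h1 := sval_mul (S - R j) T (i / 2) (i - i / 2)
    rw [show i / 2 + (i - i / 2) = i by omega] at h1
    refine h1.trans (mul_le_mul ((hRk j _).trans (a_anti (by omega)))
      (sval_antitone T (by omega)) (sval_nonneg _ _) (a_nonneg _))
  have b2 : ∀ j i, sval (T * (S - R j)) i ≤ a (i / 4) * sval T (i / 4) := by
    intro j i
    have h1 := sval_mul T (S - R j) (i - i / 2) (i / 2)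
    rw [show (i - i / 2) + i / 2 = i by omega] at h1
    rw [mul_comm (a _)]
    refine h1.trans (mul_le_mul (sval_antitone T (by omega)) ((hRk j _).trans (a_anti (by omega)))
      (sval_nonneg _ _) (sval_nonneg _ _))
  have nlim : Tendsto (fun j => ‖S - R j‖) atTop (𝓝 0) :=
    squeeze_zero (fun _ => norm_nonneg _) (fun j => (hSR j).le) a_lim
  have lim1 : Tendsto (fun j => ∑' i, sval ((S - R j) * T) i) atTop (𝓝 (∑' _ : ℕ, (0:ℝ))) := by
    refine tendsto_tsum_of_dominated_convergence hbound (fun i => ?_) (Eventually.of_forall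
      fun j i => ?_)
    · refine squeeze_zero (fun _ => sval_nonneg _ _) (fun j => (sval_le_norm _ _).trans
        (norm_mul_le _ _)) ?_
      simpa using nlim.mul_const ‖T‖
    · rw [Real.norm_of_nonneg (sval_nonneg _ _)]; exact b1 j i
  have lim2 : Tendsto (fun j => ∑' i, sval (T * (S - R j)) i) atTop (𝓝 (∑' _ : ℕ, (0:ℝ))) := by
    refine tendsto_tsum_of_dominated_convergence hbound (fun i => ?_) (Eventually.of_forall
      fun j i => ?_)
    · refine squeeze_zero (fun _ => sval_nonneg _ _) (fun j => (sval_le_norm _ _).trans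
        (norm_mul_le _ _)) ?_
      simpa using nlim.const_mul ‖T‖
    · rw [Real.norm_of_nonneg (sval_nonneg _ _)]; exact b2 j i
  have s1 : ∀ j, Summable (sval ((S - R j) * T)) := fun j =>
    Summable.of_nonneg_of_le (sval_nonneg _) (b1 j) hbound
  have s2 : ∀ j, Summable (sval (T * (S - R j))) := fun j =>
    Summable.of_nonneg_of_le (sval_nonneg _) (b2 j) hbound
  have final : ∀ j, ‖∑' i, inner ℂ (b i) ((S * T) (b i)) - ∑' i, inner ℂ (b i) ((T * S) (b i))‖ ≤
      12 * ∑' i, sval ((S - R j) * T) i + 12 * ∑' i, sval (T * (S - R j)) i := by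
    intro j
    obtain ⟨t, ht1, ht2⟩ := (hR j).trace_comm b T
    have e1 := (diag_summable b (s1 j)).hasSum.add ht1
    have e2 := (diag_summable b (s2 j)).hasSum.add ht2
    have e1' : HasSum (fun i => inner ℂ (b i) ((S * T) (b i)))
        (∑' i, inner ℂ (b i) (((S - R j) * T) (b i)) + t) := by
      convert e1 using 2 with i
      rw [← inner_add_right, ← add_apply, ← add_mul, sub_add_cancel]
    have e2' : HasSum (fun i => inner ℂ (b i) ((T * S) (b i)))
        (∑' i, inner ℂ (b i) ((T * (S - R j)) (b i)) + t) := by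
      convert e2 using 2 with i
      rw [← inner_add_right, ← add_apply, ← mul_add, sub_add_cancel]
    rw [e1'.tsum_eq, e2'.tsum_eq, add_sub_add_right_eq_sub]
    exact (norm_sub_le _ _).trans (add_le_add (diag_tsum_le b (s1 j)) (diag_tsum_le b (s2 j)))
  have lim := (lim1.const_mul 12).add (lim2.const_mul 12)
  have := ge_of_tendsto' lim final
  simp only [tsum_zero, mul_zero, add_zero] at this
  exact sub_eq_zero.1 (norm_le_zero_iff.1 this)

theorem opTrace_add {S T : H →L[ℂ] H} (hS : Summable (sval S)) (hT : Summable (sval T)) :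
    opTrace (S + T) = opTrace S + opTrace T := by
  unfold opTrace
  rw [← (diag_summable _ hS).tsum_add (diag_summable _ hT)]
  simp

theorem opTrace_smul (c : ℂ) (T : H →L[ℂ] H) : opTrace (c • T) = c * opTrace T := by
  unfold opTrace
  rw [← tsum_mul_left]
  simp

theorem Pair.opTrace_comm {S T : H →L[ℂ] H} (h : Pair S T) :
    opTrace (S * T) = opTrace (T * S) :=
  h.trace_comm _

theorem gComm_eq (ε F θ : H →L[ℂ] H) : gComm ε F θ = F * θ - ε * θ * ε * F := by
  unfold gComm evenPart oddPart
  simp only [mul_smul_comm, smul_mul_assoc, mul_add, add_mul, mul_sub, sub_mul, smul_add, smul_sub]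
  module

theorem gComm_gComm {ε F : H →L[ℂ] H} (hε2 : ε * ε = 1) (hF2 : F * F = 1)
    (hFε : F * ε = -(ε * F)) (θ : H →L[ℂ] H) : gComm ε F (gComm ε F θ) = 0 := by
  simp only [gComm_eq]
  have h1 : F * (F * θ - ε * θ * ε * F) = (F * F) * θ - (F * ε) * θ * ε * F := by noncomm_ring
  have h2 : ε * (F * θ - ε * θ * ε * F) * ε * F
      = ε * F * θ * ε * F - (ε * ε) * θ * ε * (F * ε) * F := by noncomm_ring
  rw [h1, h2, hF2, hε2, hFε]
  have h3 : 1 * θ * ε * -(ε * F) * F = - (θ * (ε * ε) * (F * F)) := by noncomm_ring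
  rw [h3, hF2, hε2]
  noncomm_ring

theorem list_sign {X : H →L[ℂ] H} (l : List (H →L[ℂ] H)) (h : ∀ x ∈ l, X * x = -(x * X)) :
    X * l.prod = (-1 : ℂ) ^ l.length • (l.prod * X) := by
  induction l with
  | nil => simp
  | cons x l ih =>
    have h1 := h x (by simp)
    have h2 := ih (fun y hy => h y (by simp [hy]))
    rw [List.prod_cons, List.length_cons, ← mul_assoc, h1, neg_mul, mul_assoc, h2, pow_succ]
    simp [mul_assoc]

/-- the lists of one-forms -/
def IsForm (ρ : A →ₐ[ℂ] (H →L[ℂ] H)) (F : H →L[ℂ] H) (l : List (H →L[ℂ] H)) : Prop :=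
  ∀ x ∈ l, ∃ a : A, x = dOp F (ρ a)

theorem omega_ind {ρ : A →ₐ[ℂ] (H →L[ℂ] H)} {F : H →L[ℂ] H} {j : ℕ} {p : (H →L[ℂ] H) → Prop}
    (hgen : ∀ (a : A) (l : List (H →L[ℂ] H)), l.length = j → IsForm ρ F l → p (ρ a * l.prod))
    (hadd : ∀ x y, p x → p y → p (x + y)) (hsmul : ∀ (c : ℂ) x, p x → p (c • x))
    {ω : H →L[ℂ] H} (hω : ω ∈ Omega ρ F j) : p ω := by
  unfold Omega at hω
  induction hω using Submodule.span_induction with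
  | mem x hx =>
    obtain ⟨a, rfl⟩ := hx
    apply hgen
    · simp
    · intro x hx
      obtain ⟨k, -, rfl⟩ := List.mem_map.1 hx
      exact ⟨_, rfl⟩
  | zero =>
    have := hgen 0 (List.replicate j (dOp F (ρ 0))) (by simp) (by
      intro x hx
      exact ⟨0, List.eq_of_mem_replicate hx⟩)
    simpa using this
  | add x y _ _ hx hy => exact hadd x y hx hy
  | smul c x _ hx => exact hsmul c x hx

theorem dOp_F {F : H →L[ℂ] H} (hF2 : F * F = 1) (T : H →L[ℂ] H) :
    F * dOp F T = -(dOp F T * F) := by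
  unfold dOp
  rw [mul_smul_comm, smul_mul_assoc, ← smul_neg]
  congr 1
  have : F * (F * T - T * F) = (F * F) * T - F * T * F := by noncomm_ring
  rw [this, hF2]
  have : (F * T - T * F) * F = F * T * F - T * (F * F) := by noncomm_ring
  rw [this, hF2]
  noncomm_ring

theorem dOp_eps {ε F : H →L[ℂ] H} (hFε : F * ε = -(ε * F)) {T : H →L[ℂ] H} (hT : ε * T = T * ε) :
    ε * dOp F T = -(dOp F T * ε) := by
  unfold dOp
  rw [mul_smul_comm, smul_mul_assoc, ← smul_neg]
  congr 1
  have hFε' : ε * F = -(F * ε) := by rw [hFε, neg_neg]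
  have e1 : ε * (F * T - T * F) = (ε * F) * T - (ε * T) * F := by noncomm_ring
  have e2 : (F * T - T * F) * ε = F * (T * ε) - T * (F * ε) := by noncomm_ring
  have g1 : ε * F * T = -(F * (T * ε)) := by rw [hFε', neg_mul, mul_assoc, hT]
  have g2 : T * ε * F = -(T * (F * ε)) := by rw [mul_assoc, hFε', mul_neg]
  rw [e1, e2, hT, g1, g2]
  abel

theorem omega_sign {ε F : H →L[ℂ] H} (hFε : F * ε = -(ε * F))
    {ρ : A →ₐ[ℂ] (H →L[ℂ] H)} (heven : ∀ a : A, ε * ρ a = ρ a * ε) {j : ℕ} {ω : H →L[ℂ] H}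
    (hω : ω ∈ Omega ρ F j) : ε * ω = (-1 : ℂ) ^ j • (ω * ε) := by
  refine omega_ind (p := fun ω => ε * ω = (-1 : ℂ) ^ j • (ω * ε)) ?_ ?_ ?_ hω
  · intro a l hl hf
    have := list_sign (X := ε) l (by
      intro x hx
      obtain ⟨a, rfl⟩ := hf x hx
      exact dOp_eps hFε (heven a))
    rw [← mul_assoc, heven, mul_assoc, this, hl, mul_smul_comm, mul_assoc]
  · intro x y hx hy
    rw [mul_add, hx, hy, add_mul, smul_add]
  · intro c x hx
    rw [mul_smul_comm, hx, smul_mul_assoc, smul_comm]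

theorem gComm_gen {ε F : H →L[ℂ] H} (hε2 : ε * ε = 1) (hF2 : F * F = 1) (hFε : F * ε = -(ε * F))
    {ρ : A →ₐ[ℂ] (H →L[ℂ] H)} (heven : ∀ a : A, ε * ρ a = ρ a * ε)
    (a : A) {l : List (H →L[ℂ] H)} (hl : IsForm ρ F l) :
    gComm ε F (ρ a * l.prod) = ((F * ρ a - ρ a * F) :: l).prod := by
  have h1 := list_sign (X := ε) l (by
      intro x hx
      obtain ⟨a, rfl⟩ := hl x hx
      exact dOp_eps hFε (heven a))
  have h2 := list_sign (X := F) l (by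
      intro x hx
      obtain ⟨a, rfl⟩ := hl x hx
      exact dOp_F hF2 _)
  rw [gComm_eq, List.prod_cons]
  have e : ε * (ρ a * l.prod) * ε * F = ρ a * (F * l.prod) := by
    calc ε * (ρ a * l.prod) * ε * F = (ε * ρ a) * l.prod * ε * F := by noncomm_ring
      _ = ρ a * (ε * l.prod) * ε * F := by rw [heven]; noncomm_ring
      _ = ρ a * ((-1 : ℂ) ^ l.length • (l.prod * (ε * ε) * F)) := by
        rw [h1]; simp only [mul_smul_comm, smul_mul_assoc, mul_assoc]
      _ = _ := by rw [hε2, mul_one, ← h2]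
  rw [e]
  noncomm_ring

theorem gComm_add (ε F x y : H →L[ℂ] H) : gComm ε F (x + y) = gComm ε F x + gComm ε F y := by
  simp only [gComm_eq]; noncomm_ring

theorem gComm_smul (ε F : H →L[ℂ] H) (c : ℂ) (x : H →L[ℂ] H) :
    gComm ε F (c • x) = c • gComm ε F x := by
  simp only [gComm_eq, mul_smul_comm, smul_mul_assoc, smul_sub]

theorem MemSchatten.summable {N : ℕ} {T : H →L[ℂ] H} (h : MemSchatten ((N : ℝ) + 1) T) :
    Summable (fun k => sval T k ^ (N + 1)) := by
  have h2 := h.2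
  unfold schattenNorm at h2
  rw [ENNReal.rpow_lt_top_iff_of_pos (by positivity)] at h2
  have := ENNReal.summable_toReal h2.ne
  refine this.congr (fun k => ?_)
  rw [ENNReal.toReal_ofReal (Real.rpow_nonneg (sval_nonneg _ _) _)]
  have : ((N : ℝ) + 1) = ((N + 1 : ℕ) : ℝ) := by push_cast; rfl
  rw [this, Real.rpow_natCast]

theorem memSchatten_one {T : H →L[ℂ] H} (hc : IsCompactOperator (⇑T)) (h : Summable (sval T)) :
    MemSchatten 1 T := by
  refine ⟨hc, ?_⟩
  unfold schattenNorm
  rw [ENNReal.rpow_lt_top_iff_of_pos (by norm_num)]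
  simp only [Real.rpow_one]
  rw [← ENNReal.ofReal_tsum_of_nonneg (sval_nonneg T) h]
  exact ENNReal.ofReal_lt_top

theorem exists_dom {N : ℕ} (l : List (H →L[ℂ] H)) (h : ∀ x ∈ l, Summable (fun k => sval x k ^ (N + 1))) :
    ∃ M : ℕ → ℝ, (∀ k, 0 ≤ M k) ∧ Summable (fun k => M k ^ (N + 1)) ∧
      ∀ x ∈ l, ∀ k, sval x k ≤ M k := by
  induction l with
  | nil => exact ⟨0, by simp, by simpa using summable_zero, by simp⟩
  | cons x l ih =>
    obtain ⟨M, h0, hs, hM⟩ := ih (fun y hy => h y (by simp [hy]))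
    refine ⟨fun k => sval x k + M k, fun k => add_nonneg (sval_nonneg _ _) (h0 k), ?_, ?_⟩
    · refine Summable.of_nonneg_of_le (fun k => pow_nonneg (add_nonneg (sval_nonneg _ _) (h0 k)) _)
        (fun k => add_pow_le (sval_nonneg _ _) (h0 k) (N + 1))
        (((h x (by simp)).add hs).mul_left _)
    · intro y hy k
      rcases List.mem_cons.1 hy with rfl | hy
      · linarith [h0 k]
      · linarith [hM y hy k, sval_nonneg x k]

theorem sval_list_prod (l : List (H →L[ℂ] H)) {k : ℕ} {M : ℝ} (h0 : 0 ≤ M)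
    (h : ∀ x ∈ l, sval x k ≤ M) : sval l.prod (l.length * k) ≤ M ^ l.length := by
  induction l with
  | nil =>
    simp only [List.prod_nil, List.length_nil, pow_zero]
    exact (sval_le_norm _ _).trans ContinuousLinearMap.norm_id_le
  | cons x l ih =>
    have h1 := h x (by simp)
    have h2 := ih (fun y hy => h y (by simp [hy]))
    rw [List.prod_cons, List.length_cons, add_mul, one_mul, add_comm _ k, pow_succ, mul_comm (M ^ _)]
    exact (sval_mul _ _ _ _).trans (mul_le_mul h1 h2 (sval_nonneg _ _) h0)

theorem pair_lists {N : ℕ} (x : H →L[ℂ] H) (l₁ l₂ : List (H →L[ℂ] H)) (B : H →L[ℂ] H)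
    (hlen : l₁.length + l₂.length = N)
    (hx : Summable (fun k => sval x k ^ (N + 1)))
    (h₁ : ∀ y ∈ l₁, Summable (fun k => sval y k ^ (N + 1)))
    (h₂ : ∀ y ∈ l₂, Summable (fun k => sval y k ^ (N + 1))) :
    Pair (x :: l₁).prod (B * l₂.prod) := by
  apply Pair.mul_right
  constructor
  · have h1 : Tendsto (sval x) atTop (𝓝 0) := by
      have h3 := hx.tendsto_atTop_zero.rpow_const (p := ((N + 1 : ℕ) : ℝ)⁻¹) (Or.inr (by positivity))
      rw [Real.zero_rpow (by positivity)] at h3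
      refine h3.congr (fun k => ?_)
      rw [Real.pow_rpow_inv_natCast (sval_nonneg _ _) (by omega)]
    rw [List.prod_cons]
    exact squeeze_zero (sval_nonneg _) (sval_mul_le_right x l₁.prod)
      (by simpa using h1.mul_const ‖l₁.prod‖)
  · obtain ⟨M, h0, hs, hM⟩ := exists_dom (N := N) ((x :: l₁) ++ l₂) (by
      intro y hy
      rcases List.mem_append.1 hy with hy | hy
      · rcases List.mem_cons.1 hy with rfl | hy
        · exact hx
        · exact h₁ y hy
      · exact h₂ y hy)
    refine summable_of_sampled (pair_antitone _ _) (pair_nonneg _ _) (N := N + 1) (by omega) ?_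
    refine Summable.of_nonneg_of_le (fun k => pair_nonneg _ _ _) (fun k => ?_) hs
    have e1 := sval_list_prod (x :: l₁) (h0 k) (fun y hy => hM y (List.mem_append_left _ hy) k)
    have e2 := sval_list_prod l₂ (h0 k) (fun y hy => hM y (List.mem_append_right _ hy) k)
    have e3 : M k ^ (N + 1) = M k ^ (x :: l₁).length * M k ^ l₂.length := by
      rw [← pow_add, List.length_cons]; congr 1; omega
    rw [e3]
    refine mul_le_mul (le_trans (sval_antitone _ ?_) e1) (le_trans (sval_antitone _ ?_) e2)
      (sval_nonneg _ _) (pow_nonneg (h0 k) _)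
    · apply Nat.mul_le_mul_right; rw [List.length_cons]; omega
    · apply Nat.mul_le_mul_right; omega

theorem form_summable {N : ℕ} {F : H →L[ℂ] H} {ρ : A →ₐ[ℂ] (H →L[ℂ] H)}
    (hS : ∀ a : A, Summable (fun k => sval (F * ρ a - ρ a * F) k ^ (N + 1)))
    {l : List (H →L[ℂ] H)} (hl : IsForm ρ F l) :
    ∀ y ∈ l, Summable (fun k => sval y k ^ (N + 1)) := by
  intro y hy
  obtain ⟨a, rfl⟩ := hl y hy
  refine Summable.of_nonneg_of_le (fun k => pow_nonneg (sval_nonneg _ _) _) (fun k => ?_) (hS a)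
  apply pow_le_pow_left₀ (sval_nonneg _ _)
  have := sval_smul_le Complex.I (F * ρ a - ρ a * F) k
  simpa [dOp] using this

theorem omega_pair {N : ℕ} {ε F : H →L[ℂ] H} (hε2 : ε * ε = 1) (hF2 : F * F = 1)
    (hFε : F * ε = -(ε * F))
    {ρ : A →ₐ[ℂ] (H →L[ℂ] H)} (heven : ∀ a : A, ε * ρ a = ρ a * ε)
    (hS : ∀ a : A, Summable (fun k => sval (F * ρ a - ρ a * F) k ^ (N + 1)))
    {n₁ n₂ : ℕ} (hn : n₁ + n₂ = N) {ω₁ ω₂ : H →L[ℂ] H} (h₁ : ω₁ ∈ Omega ρ F n₁)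
    (h₂ : ω₂ ∈ Omega ρ F n₂) : Pair (gComm ε F ω₁) ω₂ := by
  refine omega_ind (p := fun ω₁ => Pair (gComm ε F ω₁) ω₂) ?_ ?_ ?_ h₁
  · intro a l hl hf
    rw [gComm_gen hε2 hF2 hFε heven a hf]
    refine omega_ind (p := fun ω₂ => Pair _ ω₂) ?_ ?_ ?_ h₂
    · intro a' l' hl' hf'
      exact pair_lists _ _ _ _ (by omega) (hS a) (form_summable hS hf) (form_summable hS hf')
    · exact fun x y hx hy => hx.add_right hy
    · exact fun c x hx => hx.smul_right c
  · intro x y hx hy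
    rw [gComm_add]; exact hx.add_left hy
  · intro c x hx
    rw [gComm_smul]; exact hx.smul_left c

theorem epsF_comm {ε F ω : H →L[ℂ] H} (hε2 : ε * ε = 1) (hF2 : F * F = 1)
    (hFε : F * ε = -(ε * F)) {s : ℂ} (hs : s = 1 ∨ s = -1) (hω : ε * ω = s • (ω * ε)) :
    ε * F * gComm ε F ω = gComm ε F ω * (ε * F) := by
  have hε' : ε * ω * ε = s • ω := by
    rw [hω, smul_mul_assoc, mul_assoc, hε2, mul_one]
  rw [gComm_eq, hε']
  have hFε' : ε * F = -(F * ε) := by rw [hFε, neg_neg]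
  have e1 : ε * F * (F * ω - s • ω * F) = ε * (F * F) * ω - s • ((ε * F) * ω * F) := by
    simp only [mul_sub, smul_mul_assoc, mul_smul_comm, mul_assoc]
  have e2 : (F * ω - s • ω * F) * (ε * F) = F * (ω * ε) * F - s • (ω * (F * ε) * F) := by
    simp only [sub_mul, smul_mul_assoc, mul_assoc]
  have e3 : ω * -(ε * F) * F = -(ω * ε * (F * F)) := by noncomm_ring
  have e4 : -(F * ε) * ω * F = -(F * (ε * ω) * F) := by noncomm_ring
  rw [e1, e2, hF2, hFε, e3, hFε', e4, hF2, mul_one, mul_one, hω]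
  rcases hs with rfl | rfl
  · simp only [one_smul]; noncomm_ring
  · simp only [neg_smul, one_smul]; noncomm_ring

theorem gComm_mul {ε F ω₁ ω₂ : H →L[ℂ] H} (hε2 : ε * ε = 1) {s : ℂ}
    (hω : ε * ω₁ = s • (ω₁ * ε)) :
    gComm ε F (ω₁ * ω₂) = gComm ε F ω₁ * ω₂ + s • (ω₁ * gComm ε F ω₂) := by
  have hε' : ε * ω₁ * ε = s • ω₁ := by
    rw [hω, smul_mul_assoc, mul_assoc, hε2, mul_one]
  simp only [gComm_eq, hε']
  rw [← mul_assoc ε ω₁, hω]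
  simp only [mul_sub, sub_mul, smul_mul_assoc, mul_smul_comm, mul_assoc, smul_sub]
  abel

theorem trs_mul {ε F ω₁ ω₂ : H →L[ℂ] H} (hε2 : ε * ε = 1) (hF2 : F * F = 1)
    (hFε : F * ε = -(ε * F)) {s : ℂ} (hs : s = 1 ∨ s = -1)
    (h₁ : ε * ω₁ = s • (ω₁ * ε)) (h₂ : ε * ω₂ = s • (ω₂ * ε))
    (hp : Pair (gComm ε F ω₁) ω₂) (hp' : Pair (gComm ε F ω₂) ω₁) :
    Trs ε F (ω₁ * ω₂) = (2:ℂ)⁻¹ * (opTrace (ε * F * ω₂ * gComm ε F ω₁) +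
      s * opTrace (ε * F * ω₁ * gComm ε F ω₂)) := by
  unfold Trs
  have p1 := hp.mul_right (ε * F)
  have p2 := hp'.mul_right (ε * F)
  have c1 := epsF_comm hε2 hF2 hFε hs h₁
  have e : ε * F * gComm ε F (ω₁ * ω₂) = gComm ε F ω₁ * (ε * F * ω₂) +
      s • (ε * F * ω₁ * gComm ε F ω₂) := by
    rw [gComm_mul hε2 h₁, mul_add, ← mul_assoc (ε * F), c1, mul_smul_comm]
    simp only [mul_assoc]
  have p2s : Summable (sval (s • (ε * F * ω₁ * gComm ε F ω₂))) := by
    have h3 : Summable (sval (ε * F * ω₁ * gComm ε F ω₂)) :=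
      summable_sval_mul (p2.2.congr (fun k => mul_comm _ _))
    exact Summable.of_nonneg_of_le (sval_nonneg _) (sval_smul_le _ _) (h3.mul_left _)
  rw [e, opTrace_add (summable_sval_mul p1.2) p2s, opTrace_smul, p1.opTrace_comm]

theorem opTrace_zero : opTrace (0 : H →L[ℂ] H) = 0 := by
  simp [opTrace]

end Helpers

/-- Let `n = 2m` be a positive even integer, `(H, ε)` ℤ₂-graded, `F` bounded with `F² = 1`,
`Fε = -εF`, `Ã` a unital ℂ-algebra, and `ρ : Ã → B(H)` a unital homomorphism into even
operators with `Fρ(a) - ρ(a)F` being `(n+1)`-Schatten for all `a`.  Then: (i) `[F,ω]` is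
trace class for every `ω ∈ Ωⁿ`; (ii) `Tr_s(dω) = 0` for `ω ∈ Ω^{n-1}`; (iii) for
`ω₁ ∈ Ω^{n₁}`, `ω₂ ∈ Ω^{n₂}` with `n₁ + n₂ = n`, one has
`Tr_s(ω₁ω₂) = (-1)^{n₁n₂} Tr_s(ω₂ω₁)`.  That is, `Tr_s` restricted to `Ωⁿ` is a closed
graded trace of dimension `n` on the differential graded algebra `Ω`. -/
theorem trs_closed_graded_trace (m n : ℕ) (hm : 0 < m) (hn : n = 2 * m)
    (ε F : H →L[ℂ] H) (hε : IsSelfAdjoint ε) (hε2 : ε * ε = 1) (hF2 : F * F = 1)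
    (hFε : F * ε = -(ε * F))
    (ρ : A →ₐ[ℂ] (H →L[ℂ] H)) (heven : ∀ a : A, ε * ρ a = ρ a * ε)
    (hS : ∀ a : A, MemSchatten ((n : ℝ) + 1) (F * ρ a - ρ a * F)) :
    (∀ ω ∈ Omega ρ F n, MemSchatten 1 (gComm ε F ω)) ∧
    (∀ ω ∈ Omega ρ F (n - 1), Trs ε F (gD ε F ω) = 0) ∧
    (∀ n₁ n₂ : ℕ, n₁ + n₂ = n → ∀ ω₁ ∈ Omega ρ F n₁, ∀ ω₂ ∈ Omega ρ F n₂,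
      Trs ε F (ω₁ * ω₂) = (-1 : ℂ) ^ (n₁ * n₂) * Trs ε F (ω₂ * ω₁)) := by
  have hS' : ∀ a : A, Summable (fun k => sval (F * ρ a - ρ a * F) k ^ (n + 1)) :=
    fun a => (hS a).summable
  refine ⟨?_, ?_, ?_⟩
  · intro ω hω
    apply memSchatten_one
    · refine omega_ind (p := fun ω => IsCompactOperator (⇑(gComm ε F ω))) ?_ ?_ ?_ hω
      · intro a l hl hf
        rw [gComm_gen hε2 hF2 hFε heven a hf, List.prod_cons]
        exact (hS a).1.comp_clm l.prod
      · intro x y hx hy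
        rw [gComm_add]
        exact hx.add hy
      · intro c x hx
        rw [gComm_smul]
        exact hx.smul c
    · have h1 : (1 : H →L[ℂ] H) ∈ Omega ρ F 0 := by
        apply Submodule.subset_span
        exact ⟨fun _ => 1, by simp [opList]⟩
      have := summable_sval_mul (omega_pair hε2 hF2 hFε heven hS' (add_zero n) hω h1).2
      rwa [mul_one] at this
  · intro ω _
    unfold Trs gD
    rw [gComm_smul, gComm_gComm hε2 hF2 hFε, smul_zero, mul_zero, opTrace_zero, mul_zero]
  · intro n₁ n₂ h12 ω₁ h₁ ω₂ h₂
    have hpar : (-1 : ℂ) ^ n₂ = (-1 : ℂ) ^ n₁ := by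
      have : Even (n₁ + n₂) := ⟨m, by omega⟩
      rcases Nat.even_or_odd n₁ with h | h
      · rw [h.neg_one_pow, ((Nat.even_add.1 this).1 h).neg_one_pow]
      · have h' : Odd n₂ := by
          rw [← Nat.not_even_iff_odd] at h ⊢
          exact fun h3 => h ((Nat.even_add.1 this).2 h3)
        rw [h.neg_one_pow, h'.neg_one_pow]
    have hs := neg_one_pow_eq_or ℂ n₁
    have hprod : (-1 : ℂ) ^ (n₁ * n₂) = (-1 : ℂ) ^ n₁ := by
      rw [pow_mul]
      rcases hs with h | h
      · rw [h, one_pow]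
      · rw [h, hpar, h]
    have s₁ := omega_sign hFε heven h₁
    have s₂ := omega_sign hFε heven h₂
    rw [hpar] at s₂
    have p := omega_pair hε2 hF2 hFε heven hS' h12 h₁ h₂
    have p' := omega_pair hε2 hF2 hFε heven hS' (by omega : n₂ + n₁ = n) h₂ h₁
    rw [hprod, trs_mul hε2 hF2 hFε hs s₁ s₂ p p', trs_mul hε2 hF2 hFε hs s₂ s₁ p' p]
    rcases hs with h | h <;> rw [h] <;> ring
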